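/- Let a, b be coprime integers with b(a²−4b) ≠ 0, and let E_{a,b} be the elliptic curve y² = x³ + ax² + bx over ℚ. Suppose there exists a prime p dividing a²−4b with the following property: for every nonzero squarefree integer d (of either sign) such that p ∣ d and every prime factor of d divides a²−4b, there exists a prime ℓ dividing 2b(a²−4b) such that the equation z² = d·u⁴ − 2a·u²v² + ((a²−4b)/d)·v⁴ has no solution (z,u,v) ∈ ℚ_ℓ³ with (u,v) ≠ (0,0). Then rank(E_{a,b}(ℚ)) ≤ ω(a²−4b) + ω(b) − 1. -/

import Mathlib

open TensorProduct

/-- The elliptic curve `y² = x³ + ax² + bx` over `ℚ`. -/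
noncomputable def Eab (a b : ℤ) : WeierstrassCurve.Affine ℚ :=
  { a₁ := 0, a₂ := (a : ℚ), a₃ := 0, a₄ := (b : ℚ), a₆ := 0 }

/-- The Mordell–Weil rank of a Weierstrass curve over `ℚ`: the dimension of the
`ℚ`-vector space `E(ℚ) ⊗_ℤ ℚ`. -/
noncomputable def mwRank (W : WeierstrassCurve.Affine ℚ) : Cardinal :=
  Module.rank ℚ (ℚ ⊗[ℤ] W.Point)

/-- The homogeneous space `z² = d·u⁴ − 2a·u²v² + ((a²−4b)/d)·v⁴` has no nontrivial
`ℚ_ℓ`-point. -/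
def NoLocalSolution (ℓ : ℕ) (hℓ : ℓ.Prime) (a b d : ℤ) : Prop :=
  haveI : Fact ℓ.Prime := ⟨hℓ⟩
  ¬ ∃ z u v : ℚ_[ℓ], (u, v) ≠ (0, 0) ∧
    z ^ 2 = (d : ℚ_[ℓ]) * u ^ 4 - 2 * (a : ℚ_[ℓ]) * u ^ 2 * v ^ 2 +
      (((a ^ 2 - 4 * b) / d : ℤ) : ℚ_[ℓ]) * v ^ 4

/-- The number of distinct prime factors of a nonzero integer. -/
def omega (n : ℤ) : ℕ := n.natAbs.primeFactors.card

/-!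
Descent via `2`-isogeny. The quotient of `E : y² = x³ + ax² + bx` by `(0, 0)` is
`E' : y² = x³ - 2ax² + (a² - 4b)x`, and the isogeny `φ : E → E'` and its dual `ψ : E' → E`
compose to multiplication by `2`. Counting kernels and cokernels,
`2 ^ (rank E + 2) = [E'(ℚ) : φ(E(ℚ))] * [E(ℚ) : ψ(E'(ℚ))]`, where finite generation of `E(ℚ)`
comes from the finiteness of the two indices and the naive height.

The map `(x, y) ↦ x` from `E'(ℚ)` to `ℚˣ / ℚˣ²` is a homomorphism whose kernel lies in `φ(E(ℚ))`.
A squarefree `d` in its image has all its prime factors among those of `a² - 4b`, and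
`z² = du⁴ - 2au²v² + ((a² - 4b) / d)v⁴` then has a nontrivial rational point. Local insolubility
therefore forbids `p ∣ d`: the image lies in the span of `-1` and the primes of `a² - 4b` other
than `p`, and this saves a factor `2` in the first index.
-/

namespace TwoDescent

section AbelianGroups

variable {A B C : Type*} [AddCommGroup A] [AddCommGroup B] [AddCommGroup C]

theorem card_ker_comp (f : A →+ B) (g : B →+ C) :
    Nat.card (g.comp f).ker = Nat.card f.ker * Nat.card (f.range ⊓ g.ker : AddSubgroup B) := by
  have hle : f.ker ≤ (g.comp f).ker := fun x hx ↦ by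
    simp_all only [AddMonoidHom.mem_ker, AddMonoidHom.comp_apply, map_zero]
  have htower := AddSubgroup.relIndex_mul_relIndex ⊥ f.ker (g.comp f).ker bot_le hle
  rwa [AddSubgroup.relIndex_bot_left, AddSubgroup.relIndex_bot_left, AddSubgroup.relIndex_ker,
    ← AddMonoidHom.comap_ker, AddSubgroup.map_comap_eq, AddMonoidHom.comap_ker, eq_comm] at htower

theorem index_range_comp_mul_card_ker (f : A →+ B) (g : B →+ C) :
    (g.comp f).range.index * (Nat.card f.ker * Nat.card g.ker) =
      Nat.card (g.comp f).ker * (f.range.index * g.range.index) := by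
  have hsup := AddSubgroup.relIndex_mul_index (le_sup_left : f.range ≤ f.range ⊔ g.ker)
  have hinf := AddSubgroup.relIndex_mul_relIndex ⊥ (f.range ⊓ g.ker) g.ker bot_le inf_le_right
  rw [AddSubgroup.relIndex_sup_left] at hsup
  rw [AddSubgroup.relIndex_bot_left, AddSubgroup.relIndex_bot_left,
    AddSubgroup.inf_relIndex_right] at hinf
  rw [card_ker_comp, AddMonoidHom.range_comp, AddSubgroup.index_map, ← hsup, ← hinf]
  ring

theorem finiteIndex_range_comp {f : A →+ B} {g : B →+ C} (hf : f.range.FiniteIndex)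
    (hg : g.range.FiniteIndex) : (g.comp f).range.FiniteIndex := by
  have := AddSubgroup.finiteIndex_of_le (le_sup_left : f.range ≤ f.range ⊔ g.ker)
  rw [AddMonoidHom.range_comp, AddSubgroup.finiteIndex_iff, AddSubgroup.index_map]
  exact mul_ne_zero this.index_ne_zero hg.index_ne_zero

theorem index_range_nsmul_of_fg (A : Type*) [AddCommGroup A] [AddGroup.FG A] {m : ℕ} (hm : m ≠ 0) :
    (nsmulAddMonoidHom (α := A) m).range.index =
      m ^ Module.finrank ℤ A * Nat.card (nsmulAddMonoidHom (α := A) m).ker := by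
  have : Module.Finite ℤ A := Module.Finite.iff_addGroup_fg.mpr ‹_›
  set T := Submodule.torsion ℤ A
  have : Finite T := Module.finite_of_fg_torsion T (Submodule.torsion_isTorsion (R := ℤ))
  let π : A →+ A ⧸ T := T.mkQ.toAddMonoidHom
  have hπker : π.ker = T.toAddSubgroup := by ext; simp [π]
  have hπrange : π.range = ⊤ := AddMonoidHom.range_eq_top.mpr T.mkQ_surjective
  have hker : (nsmulAddMonoidHom (α := A ⧸ T) m).ker = ⊥ :=
    (AddMonoidHom.ker_eq_bot_iff _).mpr
      (AddSubgroup.nsmulAddMonoidHom_injective_of_isTorsionFree hm)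
  have hcomm : π.comp (nsmulAddMonoidHom m) = (nsmulAddMonoidHom m).comp π := by
    ext; simp [π]
  have hcomp : ((nsmulAddMonoidHom m).comp π).ker = T.toAddSubgroup := by
    rw [← AddMonoidHom.comap_ker, hker, AddMonoidHom.comap_bot, hπker]
  have hcard : Nat.card T.toAddSubgroup ≠ 0 := (Nat.card_pos (α := T)).ne'
  have hA := index_range_comp_mul_card_ker (nsmulAddMonoidHom m) π
  have hQ := index_range_comp_mul_card_ker π (nsmulAddMonoidHom m)
  rw [hcomm, hπrange, hπker, hcomp, AddSubgroup.index_top] at hA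
  rw [hπrange, hker, hπker, hcomp, AddSubgroup.index_top, AddSubgroup.card_bot,
    AddSubgroup.index_range_nsmul, finrank_quotient_eq_of_le_torsion le_rfl] at hQ
  refine mul_left_cancel₀ hcard ?_
  linear_combination Nat.card (nsmulAddMonoidHom (α := A) m).ker * hQ - hA

theorem pow_finrank_mul_card_ker [AddGroup.FG A] {m : ℕ} (hm : m ≠ 0) {f : A →+ B} {g : B →+ A}
    (hgf : g.comp f = nsmulAddMonoidHom m) :
    m ^ Module.finrank ℤ A * (Nat.card f.ker * Nat.card g.ker) =
      f.range.index * g.range.index := by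
  have hindex := (AddSubgroup.finiteIndex_range_nsmulAddMonoidHom_of_fg A hm).index_ne_zero
  have h := index_range_comp_mul_card_ker f g
  rw [index_range_nsmul_of_fg A hm] at hindex
  rw [hgf, index_range_nsmul_of_fg A hm] at h
  refine mul_left_cancel₀ (right_ne_zero_of_mul hindex) ?_
  linear_combination h

theorem rank_rat_tensor (A : Type*) [AddCommGroup A] [AddGroup.FG A] :
    Module.rank ℚ (ℚ ⊗[ℤ] A) = Module.finrank ℤ A := by
  have : Module.Finite ℤ A := Module.Finite.iff_addGroup_fg.mpr ‹_›
  rw [← Module.finrank_eq_rank, (TensorProduct.isBaseChange ℤ A ℚ).finrank_eq]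

end AbelianGroups

section Heights

open WeierstrassCurve.Affine

variable {F : Type*} [Field F] {W : WeierstrassCurve.Affine F} {x y x₁ y₁ x₂ y₂ : F}

theorem addSubMap_eval (s t u : F) : (fun i ↦ (W.addSubMap i).eval ![s, t, u]) =
    ![s ^ 2 - W.b₄ * s * u - W.b₆ * t * u - W.b₈ * u ^ 2,
      2 * t * s + W.b₂ * s * u + W.b₄ * t * u + W.b₆ * u ^ 2, t ^ 2 - 4 * s * u] := by
  funext i
  fin_cases i <;> simp [WeierstrassCurve.addSubMap]

theorem sq_sub_negY (h : W.Equation x y) :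
    (y - W.negY x y) ^ 2 = 4 * x ^ 3 + W.b₂ * x ^ 2 + 2 * W.b₄ * x + W.b₆ := by
  rw [equation_iff] at h
  simp only [negY, WeierstrassCurve.b₂, WeierstrassCurve.b₄, WeierstrassCurve.b₆]
  linear_combination 4 * h

theorem duplication_identity (h : W.Equation x y) :
    (3 * x ^ 2 + 2 * W.a₂ * x + W.a₄ - W.a₁ * y) ^ 2 +
        W.a₁ * (3 * x ^ 2 + 2 * W.a₂ * x + W.a₄ - W.a₁ * y) * (y - W.negY x y) -
        (W.a₂ + 2 * x) * (y - W.negY x y) ^ 2 =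
      x ^ 4 - W.b₄ * x ^ 2 - 2 * W.b₆ * x - W.b₈ := by
  rw [equation_iff] at h
  simp only [negY, WeierstrassCurve.b₄, WeierstrassCurve.b₆, WeierstrassCurve.b₈]
  linear_combination -(W.a₁ ^ 2 + 4 * W.a₂ + 8 * x) * h

theorem duplication_numerator_ne_zero (h : W.Nonsingular x y) (hy : y = W.negY x y) :
    x ^ 4 - W.b₄ * x ^ 2 - 2 * W.b₆ * x - W.b₈ ≠ 0 := by
  have hpartial := ((nonsingular_iff x y).mp h).2.resolve_right (not_not.mpr hy)
  rw [← duplication_identity h.1, sub_eq_zero.mpr hy, mul_zero, zero_pow two_ne_zero, mul_zero,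
    add_zero, sub_zero]
  exact pow_ne_zero 2 (sub_ne_zero.mpr hpartial.symm)

variable (W) in
/-- The naive height of a point, the logarithmic height of its `x`-coordinate in `ℙ¹`. -/
noncomputable def naiveHeight [Height.AdmissibleAbsValues F] (P : W.Point) : ℝ :=
  Height.logHeight P.xRep

variable (W) in
theorem northcott_naiveHeight [Height.AdmissibleAbsValues F]
    [Northcott (Height.logHeight₁ (K := F))] : Northcott (naiveHeight W) := by
  refine ⟨fun B ↦ ?_⟩
  have hfin := ((Northcott.finite_le (h := Height.logHeight₁ (K := F)) B).image
    (fun x ↦ ![x, 1])).insert ![1, 0]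
  refine (hfin.preimage' (f := Point.xRep) fun X _ ↦ ?_).subset ?_
  · rcases (Point.xRep ⁻¹' {X}).eq_empty_or_nonempty with hempty | ⟨P, hP⟩
    · exact hempty ▸ Set.finite_empty
    · exact (Set.toFinite {P, -P}).subset fun Q hQ ↦
        Point.eq_or_eq_neg_of_xRep_eq_xRep (hQ.trans hP.symm)
  · rintro (_ | ⟨x, y, h⟩) hP
    · exact .inl Point.xRep_zero
    · refine .inr ⟨x, ?_, (Point.xRep_some h).symm⟩
      rwa [Set.mem_ofPred_eq, Height.logHeight₁_eq_logHeight]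

variable [DecidableEq F]

theorem addX_slope_self_mul (h : W.Equation x y) (hy : y ≠ W.negY x y) :
    (y - W.negY x y) ^ 2 * W.addX x x (W.slope x x y y) =
      x ^ 4 - W.b₄ * x ^ 2 - 2 * W.b₆ * x - W.b₈ := by
  have hy' : y - W.negY x y ≠ 0 := sub_ne_zero.mpr hy
  rw [← duplication_identity h, slope_of_Y_ne rfl hy, addX]
  field_simp
  ring

theorem addX_slope_mul (hx : x₁ ≠ x₂) :
    (x₁ - x₂) ^ 2 * W.addX x₁ x₂ (W.slope x₁ x₂ y₁ y₂) =
      (y₁ - y₂) ^ 2 + W.a₁ * (y₁ - y₂) * (x₁ - x₂) - (W.a₂ + x₁ + x₂) * (x₁ - x₂) ^ 2 := by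
  have hx' : x₁ - x₂ ≠ 0 := sub_ne_zero.mpr hx
  rw [slope_of_X_ne hx, addX]
  field_simp
  ring

theorem addX_add_addX_negY (h₁ : W.Equation x₁ y₁) (h₂ : W.Equation x₂ y₂) (hx : x₁ ≠ x₂) :
    (x₁ - x₂) ^ 2 * (W.addX x₁ x₂ (W.slope x₁ x₂ y₁ y₂) +
        W.addX x₁ x₂ (W.slope x₁ x₂ y₁ (W.negY x₂ y₂))) =
      2 * (x₁ + x₂) * (x₁ * x₂) + W.b₂ * (x₁ * x₂) + W.b₄ * (x₁ + x₂) + W.b₆ := by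
  rw [mul_add, addX_slope_mul hx, addX_slope_mul hx]
  rw [equation_iff] at h₁ h₂
  simp only [negY, WeierstrassCurve.b₂, WeierstrassCurve.b₄, WeierstrassCurve.b₆]
  linear_combination 2 * h₁ + 2 * h₂

theorem addX_mul_addX_negY (h₁ : W.Equation x₁ y₁) (h₂ : W.Equation x₂ y₂) (hx : x₁ ≠ x₂) :
    (x₁ - x₂) ^ 2 * (W.addX x₁ x₂ (W.slope x₁ x₂ y₁ y₂) *
        W.addX x₁ x₂ (W.slope x₁ x₂ y₁ (W.negY x₂ y₂))) =
      (x₁ * x₂) ^ 2 - W.b₄ * (x₁ * x₂) - W.b₆ * (x₁ + x₂) - W.b₈ := by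
  refine mul_left_cancel₀ (pow_ne_zero 2 (sub_ne_zero.mpr hx)) ?_
  have hadd := addX_slope_mul (W := W) (y₁ := y₁) (y₂ := y₂) hx
  have hsub := addX_slope_mul (W := W) (y₁ := y₁) (y₂ := W.negY x₂ y₂) hx
  have hsum := addX_add_addX_negY h₁ h₂ hx
  rw [mul_add, hadd, hsub] at hsum
  rw [← mul_assoc (_ ^ 2) (_ ^ 2), mul_mul_mul_comm, hadd, hsub]
  rw [equation_iff] at h₁ h₂
  simp only [negY, WeierstrassCurve.b₂, WeierstrassCurve.b₄, WeierstrassCurve.b₆,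
    WeierstrassCurve.b₈] at hsum ⊢
  have hmul : (y₁ - y₂) * (y₁ - (-y₂ - W.a₁ * x₂ - W.a₃)) =
      (x₁ ^ 3 + W.a₂ * x₁ ^ 2 + W.a₄ * x₁) - (x₂ ^ 3 + W.a₂ * x₂ ^ 2 + W.a₄ * x₂) -
        W.a₁ * (x₁ - x₂) * y₁ := by
    linear_combination h₁ - h₂
  linear_combination
    ((y₁ - y₂ + W.a₁ * (x₁ - x₂)) * (y₁ - (-y₂ - W.a₁ * x₂ - W.a₃) + W.a₁ * (x₁ - x₂))) * hmul +
    ((x₁ ^ 3 + W.a₂ * x₁ ^ 2 + W.a₄ * x₁) - (x₂ ^ 3 + W.a₂ * x₂ ^ 2 + W.a₄ * x₂) -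
        W.a₁ * (x₁ - x₂) * y₁) * (h₁ - h₂) - W.a₁ ^ 2 * (x₁ - x₂) ^ 2 * h₁ -
    (W.a₂ + x₁ + x₂) * (x₁ - x₂) ^ 2 * hsum

/-- The points `P` and `Q` satisfy the defining property of `WeierstrassCurve.addSubMap`: in `ℙ²`,
regarded as the symmetric square of the `x`-line, it maps `{x(P), x(Q)}` to
`{x(P + Q), x(P - Q)}`. -/
def AddSubMapCompatible (P Q : W.Point) : Prop :=
  ∃ t : F, t ≠ 0 ∧
    (fun i ↦ (W.addSubMap i).eval (P.sym2x Q)) = t • (P + Q).sym2x (P - Q)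

theorem AddSubMapCompatible.of_neg_right {P Q : W.Point} (h : AddSubMapCompatible P (-Q)) :
    AddSubMapCompatible P Q := by
  obtain ⟨t, ht, heq⟩ := h
  rw [Point.sym2x_neg_right, sub_neg_eq_add, ← sub_eq_add_neg, Point.sym2x_comm (P - Q)] at heq
  exact ⟨t, ht, heq⟩

theorem AddSubMapCompatible.symm {P Q : W.Point} (h : AddSubMapCompatible P Q) :
    AddSubMapCompatible Q P := by
  obtain ⟨t, ht, heq⟩ := h
  rw [Point.sym2x_comm, add_comm, ← neg_sub, Point.sym2x_neg_right] at heq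
  exact ⟨t, ht, heq⟩

theorem addSubMapCompatible_zero_right (P : W.Point) : AddSubMapCompatible P 0 := by
  refine ⟨1, one_ne_zero, ?_⟩
  rw [add_zero, sub_zero, one_smul]
  rcases P with _ | ⟨x, y, h⟩
  · rw [← Point.zero_def, Point.sym2x_zero_zero, addSubMap_eval]
    exact Matrix.vec3_eq (by ring) (by ring) (by ring)
  · rw [Point.sym2x_some_zero, Point.sym2x_some_some, addSubMap_eval]
    exact Matrix.vec3_eq (by ring) (by ring) (by ring)

theorem addSubMapCompatible_self (P : W.Point) : AddSubMapCompatible P P := by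
  rcases P with _ | ⟨x, y, h⟩
  · exact addSubMapCompatible_zero_right 0
  by_cases hy : y = W.negY x y
  · refine ⟨_, duplication_numerator_ne_zero h hy, ?_⟩
    have htwo := sq_sub_negY h.1
    rw [sub_eq_zero.mpr hy, zero_pow two_ne_zero] at htwo
    rw [Point.add_of_Y_eq rfl hy, sub_self, Point.sym2x_zero_zero, Point.sym2x_some_some,
      addSubMap_eval, Matrix.smul_vec3]
    refine Matrix.vec3_eq ?_ ?_ ?_ <;> simp only [smul_eq_mul]
    · ring
    · linear_combination -htwo
    · ring
  · refine ⟨(y - W.negY x y) ^ 2, pow_ne_zero 2 (sub_ne_zero.mpr hy), ?_⟩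
    rw [Point.add_some (fun h ↦ hy h.2), sub_self, Point.sym2x_some_zero, Point.sym2x_some_some,
      addSubMap_eval, Matrix.smul_vec3]
    refine Matrix.vec3_eq ?_ ?_ ?_ <;> simp only [smul_eq_mul]
    · linear_combination -addX_slope_self_mul h.1 hy
    · linear_combination -sq_sub_negY h.1
    · ring

theorem addSubMapCompatible_of_X_ne (h₁ : W.Nonsingular x₁ y₁) (h₂ : W.Nonsingular x₂ y₂)
    (hx : x₁ ≠ x₂) : AddSubMapCompatible (Point.some x₁ y₁ h₁) (Point.some x₂ y₂ h₂) := by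
  refine ⟨(x₁ - x₂) ^ 2, pow_ne_zero 2 (sub_ne_zero.mpr hx), ?_⟩
  rw [sub_eq_add_neg (Point.some ..), Point.neg_some, Point.add_some (fun h ↦ hx h.1),
    Point.add_some (fun h ↦ hx h.1), Point.sym2x_some_some, Point.sym2x_some_some, addSubMap_eval,
    Matrix.smul_vec3]
  refine Matrix.vec3_eq ?_ ?_ ?_ <;> simp only [smul_eq_mul]
  · linear_combination -addX_mul_addX_negY h₁.1 h₂.1 hx
  · linear_combination -addX_add_addX_negY h₁.1 h₂.1 hx
  · ring

theorem addSubMapCompatible (P Q : W.Point) : AddSubMapCompatible P Q := by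
  rcases Q with _ | ⟨x₂, y₂, h₂⟩
  · exact addSubMapCompatible_zero_right P
  rcases P with _ | ⟨x₁, y₁, h₁⟩
  · exact (addSubMapCompatible_zero_right _).symm
  by_cases hx : x₁ = x₂
  · have hxRep : (Point.some x₁ y₁ h₁).xRep = (Point.some x₂ y₂ h₂).xRep := by
      rw [Point.xRep_some, Point.xRep_some, hx]
    rcases Point.eq_or_eq_neg_of_xRep_eq_xRep hxRep with heq | heq
    · rw [heq]
      exact addSubMapCompatible_self _
    · rw [heq]
      exact AddSubMapCompatible.of_neg_right (addSubMapCompatible_self _)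
  · exact addSubMapCompatible_of_X_ne h₁ h₂ hx

variable (W) in
theorem exists_abs_naiveHeight_parallelogram_le [Height.AdmissibleAbsValues F] [W.IsElliptic] :
    ∃ C, ∀ P Q : W.Point, |naiveHeight W (P + Q) + naiveHeight W (P - Q) -
      2 * (naiveHeight W P + naiveHeight W Q)| ≤ C := by
  obtain ⟨C₁, hC₁⟩ := WeierstrassCurve.abs_logHeight_addSubMap_sub_two_mul_logHeight_le W
  obtain ⟨C₂, hC₂⟩ := Height.abs_logHeight_sym2_sub_le F
  have hsym (P Q : W.Point) :
      |Height.logHeight (P.sym2x Q) - (naiveHeight W P + naiveHeight W Q)| ≤ C₂ := by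
    have heta (R : W.Point) : ![R.xRep 0, R.xRep 1] = R.xRep := by rcases R <;> rfl
    have := hC₂ ((heta P).symm ▸ P.xRep_ne_zero) ((heta Q).symm ▸ Q.xRep_ne_zero)
    rwa [heta, heta] at this
  refine ⟨C₁ + 3 * C₂, fun P Q ↦ ?_⟩
  obtain ⟨t, ht, heq⟩ := addSubMapCompatible P Q
  have hmap := hC₁ (P.sym2x Q)
  rw [heq, Height.logHeight_smul_eq_logHeight _ ht] at hmap
  have hPQ := hsym P Q
  have haddsub := hsym (P + Q) (P - Q)
  rw [abs_le] at *
  constructor <;> linarith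

theorem fg_point_of_finiteIndex_two [Height.AdmissibleAbsValues F]
    [Northcott (Height.logHeight₁ (K := F))] [W.IsElliptic]
    (h : (nsmulAddMonoidHom (α := W.Point) 2).range.FiniteIndex) : AddGroup.FG W.Point := by
  obtain ⟨C, hC⟩ := exists_abs_naiveHeight_parallelogram_le W
  have := northcott_naiveHeight W
  exact AddCommGroup.fg_of_descent' (h := naiveHeight W) h
    (fun P ↦ Height.logHeight_nonneg P.xRep) hC

end Heights

section Curve

open WeierstrassCurve.Affine

/-- The Weierstrass curve `y² = x³ + ax² + bx`, whose point `(0, 0)` is `2`-torsion. -/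
def twoTorsionCurve {F : Type*} [Zero F] (a b : F) : WeierstrassCurve.Affine F :=
  { a₁ := 0, a₂ := a, a₃ := 0, a₄ := b, a₆ := 0 }

/-- The line `y = lx + n` cuts `y² = x³ + ax² + bx` exactly in the points `(xᵢ, yᵢ)`, counted with
multiplicity: the last three fields compare coefficients in
`x³ + ax² + bx - (lx + n)² = (x - x₁)(x - x₂)(x - x₃)`. -/
structure IsLineSection {F : Type*} [CommRing F] (a b l n x₁ y₁ x₂ y₂ x₃ y₃ : F) : Prop where
  y₁_eq : y₁ = l * x₁ + n
  y₂_eq : y₂ = l * x₂ + n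
  y₃_eq : y₃ = l * x₃ + n
  sum_eq : x₁ + x₂ + x₃ = l ^ 2 - a
  sum_mul_eq : x₁ * x₂ + x₁ * x₃ + x₂ * x₃ = b - 2 * l * n
  prod_eq : x₁ * x₂ * x₃ = n ^ 2

variable {F : Type*} [Field F] {a b l n x y x₁ y₁ x₂ y₂ x₃ y₃ : F}

theorem equation_twoTorsionCurve_iff :
    (twoTorsionCurve a b).Equation x y ↔ y ^ 2 = x ^ 3 + a * x ^ 2 + b * x := by
  simp only [equation_iff, twoTorsionCurve, zero_mul, add_zero]

theorem negY_twoTorsionCurve : (twoTorsionCurve a b).negY x y = -y := by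
  simp only [negY, twoTorsionCurve, zero_mul, sub_zero]

theorem Δ_twoTorsionCurve : (twoTorsionCurve a b).Δ = 16 * b ^ 2 * (a ^ 2 - 4 * b) := by
  simp only [WeierstrassCurve.Δ, WeierstrassCurve.b₂, WeierstrassCurve.b₄, WeierstrassCurve.b₆,
    WeierstrassCurve.b₈, twoTorsionCurve]
  ring

theorem nonsingular_neg_twoTorsionCurve (h : (twoTorsionCurve a b).Nonsingular x y) :
    (twoTorsionCurve a b).Nonsingular x (-y) := by
  simpa only [negY_twoTorsionCurve] using (nonsingular_neg x y).mpr h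

theorem neg_some_twoTorsionCurve (h : (twoTorsionCurve a b).Nonsingular x y) :
    -Point.some x y h = Point.some x (-y) (nonsingular_neg_twoTorsionCurve h) := by
  simp only [Point.neg_some, negY_twoTorsionCurve]

theorem Δ_twoTorsionCurve_ne_zero [NeZero (2 : F)] (hb : b ≠ 0) (hab : a ^ 2 - 4 * b ≠ 0) :
    (twoTorsionCurve a b).Δ ≠ 0 := by
  rw [Δ_twoTorsionCurve, show (16 : F) = 2 ^ 4 by norm_num]
  exact mul_ne_zero (mul_ne_zero (pow_ne_zero _ two_ne_zero) (pow_ne_zero _ hb)) hab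

theorem eq_zero_of_nonsingular_zero (h : (twoTorsionCurve a b).Nonsingular 0 y) : y = 0 := by
  simpa using equation_twoTorsionCurve_iff.mp h.1

namespace IsLineSection

theorem swap₁₂ (h : IsLineSection a b l n x₁ y₁ x₂ y₂ x₃ y₃) :
    IsLineSection a b l n x₂ y₂ x₁ y₁ x₃ y₃ :=
  ⟨h.y₂_eq, h.y₁_eq, h.y₃_eq, by linear_combination h.sum_eq, by linear_combination h.sum_mul_eq,
    by linear_combination h.prod_eq⟩

theorem swap₁₃ (h : IsLineSection a b l n x₁ y₁ x₂ y₂ x₃ y₃) :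
    IsLineSection a b l n x₃ y₃ x₂ y₂ x₁ y₁ :=
  ⟨h.y₃_eq, h.y₂_eq, h.y₁_eq, by linear_combination h.sum_eq, by linear_combination h.sum_mul_eq,
    by linear_combination h.prod_eq⟩

theorem ne_zero (h : IsLineSection a b l n x₁ y₁ x₂ y₂ x₃ y₃) (hn : n ≠ 0) :
    x₁ ≠ 0 ∧ x₂ ≠ 0 ∧ x₃ ≠ 0 := by
  have hprod : x₁ * x₂ * x₃ ≠ 0 := h.prod_eq ▸ pow_ne_zero 2 hn
  exact ⟨left_ne_zero_of_mul (left_ne_zero_of_mul hprod),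
    right_ne_zero_of_mul (left_ne_zero_of_mul hprod), right_ne_zero_of_mul hprod⟩

theorem mul_eq_of_zero (h : IsLineSection a b l 0 0 0 x₂ y₂ x₃ y₃) : x₂ * x₃ = b := by
  linear_combination h.sum_mul_eq

theorem exists_param (h : IsLineSection a b l n x₁ y₁ x₂ y₂ x₃ y₃) (hn : n ≠ 0) :
    ∃ w₁ w₂ w₃, (w₁ ≠ 0 ∧ w₂ ≠ 0 ∧ w₃ ≠ 0) ∧ n = w₁ * w₂ * w₃ ∧
      (x₁ = w₂ * w₃ ∧ x₂ = w₁ * w₃ ∧ x₃ = w₁ * w₂) ∧ b = (w₁ + w₂ + w₃ + 2 * l) * n := by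
  obtain ⟨hx₁, hx₂, hx₃⟩ := h.ne_zero hn
  have hprod := h.prod_eq
  refine ⟨n / x₁, n / x₂, n / x₃, ⟨div_ne_zero hn hx₁, div_ne_zero hn hx₂, div_ne_zero hn hx₃⟩,
    ?_, ⟨?_, ?_, ?_⟩, ?_⟩
  · field_simp
    exact hprod
  · field_simp
    linear_combination hprod
  · field_simp
    linear_combination hprod
  · field_simp
    linear_combination hprod
  · field_simp
    linear_combination (-x₁ * x₂ * x₃) * h.sum_mul_eq + (x₁ * x₂ + x₁ * x₃ + x₂ * x₃) * hprod

end IsLineSection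

variable [DecidableEq F]

theorem slope_spec (h₁ : (twoTorsionCurve a b).Equation x₁ y₁)
    (h₂ : (twoTorsionCurve a b).Equation x₂ y₂) (hne : ¬(x₁ = x₂ ∧ y₁ = -y₂)) :
    y₁ - y₂ = (twoTorsionCurve a b).slope x₁ x₂ y₁ y₂ * (x₁ - x₂) ∧
      (twoTorsionCurve a b).slope x₁ x₂ y₁ y₂ * (y₁ + y₂) =
        x₁ ^ 2 + x₁ * x₂ + x₂ ^ 2 + a * (x₁ + x₂) + b := by
  have e₁ := equation_twoTorsionCurve_iff.mp h₁
  have e₂ := equation_twoTorsionCurve_iff.mp h₂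
  by_cases hx : x₁ = x₂
  · subst hx
    have hy : y₁ ≠ -y₂ := fun h ↦ hne ⟨rfl, h⟩
    obtain rfl : y₁ = y₂ :=
      (sq_eq_sq_iff_eq_or_eq_neg.mp (e₁.trans e₂.symm)).resolve_right hy
    have hy₂ : y₁ - -y₁ ≠ 0 := sub_ne_zero.mpr hy
    rw [slope_of_Y_ne rfl (by rwa [negY_twoTorsionCurve]), negY_twoTorsionCurve]
    refine ⟨by ring, ?_⟩
    rw [sub_neg_eq_add] at hy₂ ⊢
    rw [div_mul_cancel₀ _ hy₂]
    simp only [twoTorsionCurve]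
    ring
  · have hx' : x₁ - x₂ ≠ 0 := sub_ne_zero.mpr hx
    rw [slope_of_X_ne hx]
    constructor
    · field_simp
    · field_simp
      linear_combination e₁ - e₂

theorem exists_isLineSection_of_add_eq_zero {h₁ : (twoTorsionCurve a b).Nonsingular x₁ y₁}
    {h₂ : (twoTorsionCurve a b).Nonsingular x₂ y₂} {h₃ : (twoTorsionCurve a b).Nonsingular x₃ y₃}
    (h : Point.some x₁ y₁ h₁ + Point.some x₂ y₂ h₂ + Point.some x₃ y₃ h₃ = 0) :
    ∃ l n, IsLineSection a b l n x₁ y₁ x₂ y₂ x₃ y₃ := by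
  have hsum := eq_neg_of_add_eq_zero_left h
  have hne : ¬(x₁ = x₂ ∧ y₁ = -y₂) := fun hxy ↦ by
    rw [Point.add_of_Y_eq hxy.1 (hxy.2.trans negY_twoTorsionCurve.symm),
      neg_some_twoTorsionCurve] at hsum
    exact Point.some_ne_zero _ hsum.symm
  obtain ⟨hl₁, hl₂⟩ := slope_spec h₁.1 h₂.1 hne
  rw [Point.add_some (by rwa [negY_twoTorsionCurve]), neg_some_twoTorsionCurve,
    Point.some.injEq] at hsum
  set l := (twoTorsionCurve a b).slope x₁ x₂ y₁ y₂
  simp only [addX, addY, negAddY, negY_twoTorsionCurve, neg_inj] at hsum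
  simp only [twoTorsionCurve, zero_mul, add_zero] at hsum
  obtain ⟨rfl, hy⟩ := hsum
  have e₁ := equation_twoTorsionCurve_iff.mp h₁.1
  refine ⟨l, y₁ - l * x₁, by ring, by linear_combination -hl₁, by linear_combination -hy,
    by ring, ?_, ?_⟩
  · linear_combination hl₂ + l * hl₁
  · linear_combination x₁ * (hl₂ + l * hl₁) - e₁

theorem IsLineSection.slope_eq (h : IsLineSection a b l n x₁ y₁ x₂ y₂ x₃ y₃)
    (h₁ : (twoTorsionCurve a b).Equation x₁ y₁) (h₂ : (twoTorsionCurve a b).Equation x₂ y₂)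
    (hne : ¬(x₁ = x₂ ∧ y₁ = -y₂)) : (twoTorsionCurve a b).slope x₁ x₂ y₁ y₂ = l := by
  obtain ⟨hl₁, hl₂⟩ := slope_spec h₁ h₂ hne
  by_cases hx : x₁ = x₂
  · subst hx
    obtain rfl : y₁ = y₂ := h.y₁_eq.trans h.y₂_eq.symm
    have hy : y₁ + y₁ ≠ 0 := fun h0 ↦ hne ⟨rfl, eq_neg_of_add_eq_zero_left h0⟩
    refine mul_right_cancel₀ hy (hl₂.trans ?_)
    linear_combination 2 * x₁ * h.sum_eq - h.sum_mul_eq - 2 * l * h.y₁_eq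
  · refine mul_right_cancel₀ (sub_ne_zero.mpr hx) (hl₁.symm.trans ?_)
    linear_combination h.y₁_eq - h.y₂_eq

theorem IsLineSection.add_eq_zero (h : IsLineSection a b l n x₁ y₁ x₂ y₂ x₃ y₃)
    (h₁ : (twoTorsionCurve a b).Nonsingular x₁ y₁) (h₂ : (twoTorsionCurve a b).Nonsingular x₂ y₂)
    (h₃ : (twoTorsionCurve a b).Nonsingular x₃ y₃) :
    Point.some x₁ y₁ h₁ + Point.some x₂ y₂ h₂ + Point.some x₃ y₃ h₃ = 0 := by
  have hne : ¬(x₁ = x₂ ∧ y₁ = -y₂) := by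
    rintro ⟨rfl, hy⟩
    have hy₁ : 2 * y₁ = 0 := by linear_combination hy + h.y₁_eq - h.y₂_eq
    have hX : 3 * x₁ ^ 2 + 2 * a * x₁ + b = 0 := by
      linear_combination 2 * x₁ * h.sum_eq - h.sum_mul_eq - 2 * l * h.y₁_eq + l * hy₁
    rcases ((nonsingular_iff _ _).mp h₁).2 with h' | h' <;>
      simp only [twoTorsionCurve, zero_mul, sub_zero] at h'
    · exact h' (by linear_combination -hX)
    · exact h' (by linear_combination hy₁)
  rw [add_eq_zero_iff_eq_neg, Point.add_some (by rwa [negY_twoTorsionCurve]),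
    neg_some_twoTorsionCurve, Point.some.injEq, h.slope_eq h₁.1 h₂.1 hne]
  simp only [addX, addY, negAddY, negY_twoTorsionCurve, neg_inj]
  simp only [twoTorsionCurve, zero_mul, add_zero]
  have hx₃ : l ^ 2 - a - x₁ - x₂ = x₃ := by linear_combination -h.sum_eq
  rw [hx₃]
  exact ⟨rfl, by linear_combination h.y₁_eq - h.y₃_eq⟩

variable {M : Type*} [AddCommGroup M]

theorem map_add_of_isLineSection {f : (twoTorsionCurve a b).Point → M} (hzero : f 0 = 0)
    (hneg : ∀ P, f (-P) = -f P)
    (hline : ∀ {l n x₁ y₁ x₂ y₂ x₃ y₃} h₁ h₂ h₃, IsLineSection a b l n x₁ y₁ x₂ y₂ x₃ y₃ →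
      f (.some x₁ y₁ h₁) + f (.some x₂ y₂ h₂) + f (.some x₃ y₃ h₃) = 0)
    (P Q : (twoTorsionCurve a b).Point) : f (P + Q) = f P + f Q := by
  rcases P with _ | ⟨x₁, y₁, h₁⟩
  · rw [← Point.zero_def, zero_add, hzero, zero_add]
  rcases Q with _ | ⟨x₂, y₂, h₂⟩
  · rw [← Point.zero_def, add_zero, hzero, add_zero]
  rcases hR : -(Point.some x₁ y₁ h₁ + Point.some x₂ y₂ h₂) with _ | ⟨x₃, y₃, h₃⟩
  · rw [← Point.zero_def, neg_eq_zero] at hR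
    rw [hR, hzero, eq_neg_of_add_eq_zero_left hR, hneg, neg_add_cancel]
  · obtain ⟨l, n, hl⟩ := exists_isLineSection_of_add_eq_zero (h₁ := h₁) (h₂ := h₂)
      (hR ▸ add_neg_cancel (Point.some x₁ y₁ h₁ + Point.some x₂ y₂ h₂))
    have hsum := hline h₁ h₂ h₃ hl
    rw [← hR, hneg, add_neg_eq_zero] at hsum
    exact hsum.symm

theorem map_add_of_isLineSection_cases {f : (twoTorsionCurve a b).Point → M} (hzero : f 0 = 0)
    (hneg : ∀ P, f (-P) = -f P)
    (horigin : ∀ {l x₂ y₂ x₃ y₃} h₁ h₂ h₃, IsLineSection a b l 0 0 0 x₂ y₂ x₃ y₃ →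
      f (.some 0 0 h₁) + f (.some x₂ y₂ h₂) + f (.some x₃ y₃ h₃) = 0)
    (hgeneric : ∀ {l n x₁ y₁ x₂ y₂ x₃ y₃} h₁ h₂ h₃, n ≠ 0 →
      IsLineSection a b l n x₁ y₁ x₂ y₂ x₃ y₃ →
      f (.some x₁ y₁ h₁) + f (.some x₂ y₂ h₂) + f (.some x₃ y₃ h₃) = 0)
    (P Q : (twoTorsionCurve a b).Point) : f (P + Q) = f P + f Q := by
  refine map_add_of_isLineSection hzero hneg (fun {l n x₁ y₁ x₂ y₂ x₃ y₃} h₁ h₂ h₃ h ↦ ?_) P Q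
  by_cases hn : n = 0
  · subst hn
    have hprod : x₁ * x₂ * x₃ = 0 := by simpa using h.prod_eq
    rcases mul_eq_zero.mp hprod with hx₁₂ | rfl
    · rcases mul_eq_zero.mp hx₁₂ with rfl | rfl
      · obtain rfl := eq_zero_of_nonsingular_zero h₁
        exact horigin h₁ h₂ h₃ h
      · obtain rfl := eq_zero_of_nonsingular_zero h₂
        rw [add_comm (f _)]
        exact horigin h₂ h₁ h₃ h.swap₁₂
    · obtain rfl := eq_zero_of_nonsingular_zero h₃
      rw [add_comm, add_comm (f (.some x₁ y₁ h₁)), ← add_assoc]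
      exact horigin h₃ h₂ h₁ h.swap₁₃
  · exact hgeneric h₁ h₂ h₃ hn h

end Curve

section Isogeny

open WeierstrassCurve.Affine

/-- The curve `y² = x³ + Ax² + Bx` is the quotient of `y² = x³ + ax² + bx` by `(0, 0)`. The usual
model of the quotient has `c = 1`; the parameter `c` rescales it by `(x, y) ↦ (c²x, c³y)`, which
makes the relation symmetric. -/
structure IsTwoIsogenous {F : Type*} [Field F] (a b A B c : F) : Prop where
  b_ne_zero : b ≠ 0
  B_ne_zero : B ≠ 0
  A_eq : A = -2 * a * c ^ 2
  B_eq : B = c ^ 4 * (a ^ 2 - 4 * b)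

variable {F : Type*} [Field F] {a b A B c l n x y x₁ y₁ x₂ y₂ x₃ y₃ : F}

theorem IsTwoIsogenous.scale_ne_zero (h : IsTwoIsogenous a b A B c) : c ≠ 0 := by
  rintro rfl
  exact h.B_ne_zero (by rw [h.B_eq]; ring)

theorem IsTwoIsogenous.disc_ne_zero (h : IsTwoIsogenous a b A B c) : a ^ 2 - 4 * b ≠ 0 :=
  right_ne_zero_of_mul (h.B_eq ▸ h.B_ne_zero)

theorem IsTwoIsogenous.equation_map (h : IsTwoIsogenous a b A B c)
    (hxy : (twoTorsionCurve a b).Equation x y) (hx : x ≠ 0) :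
    (twoTorsionCurve A B).Equation (c ^ 2 * (y / x) ^ 2) (c ^ 3 * (y / x) * (x - b / x)) := by
  rw [equation_twoTorsionCurve_iff] at hxy ⊢
  have hslope : (y / x) ^ 2 = x + a + b / x := by
    field_simp
    linear_combination hxy
  have hb : b = b / x * x := (div_mul_cancel₀ b hx).symm
  rw [h.A_eq, h.B_eq]
  linear_combination (c ^ 6 * (y / x) ^ 2 * (2 * a - (y / x) ^ 2 - (x + a + b / x))) * hslope +
    4 * c ^ 6 * (y / x) ^ 2 * hb

theorem IsTwoIsogenous.isLineSection_map (h : IsTwoIsogenous a b A B c) (hn : n ≠ 0)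
    (hl : IsLineSection a b l n x₁ y₁ x₂ y₂ x₃ y₃) :
    IsLineSection A B (c * (l - b / n)) (c ^ 3 * (n - a * l + l ^ 2 * (b / n)))
      (c ^ 2 * (y₁ / x₁) ^ 2) (c ^ 3 * (y₁ / x₁) * (x₁ - b / x₁))
      (c ^ 2 * (y₂ / x₂) ^ 2) (c ^ 3 * (y₂ / x₂) * (x₂ - b / x₂))
      (c ^ 2 * (y₃ / x₃) ^ 2) (c ^ 3 * (y₃ / x₃) * (x₃ - b / x₃)) := by
  obtain ⟨w₁, w₂, w₃, ⟨hw₁, hw₂, hw₃⟩, rfl, ⟨rfl, rfl, rfl⟩, rfl⟩ := hl.exists_param hn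
  have ha : a = l ^ 2 - (w₂ * w₃ + w₁ * w₃ + w₁ * w₂) := by linear_combination hl.sum_eq
  have hy₁ : y₁ / (w₂ * w₃) = l + w₁ := by rw [hl.y₁_eq]; field_simp
  have hy₂ : y₂ / (w₁ * w₃) = l + w₂ := by rw [hl.y₂_eq]; field_simp
  have hy₃ : y₃ / (w₁ * w₂) = l + w₃ := by rw [hl.y₃_eq]; field_simp
  set s := w₁ + w₂ + w₃ + 2 * l with hs
  have hbn : s * (w₁ * w₂ * w₃) / (w₁ * w₂ * w₃) = s := by field_simp
  have hb₁ : s * (w₁ * w₂ * w₃) / (w₂ * w₃) = w₁ * s := by field_simp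
  have hb₂ : s * (w₁ * w₂ * w₃) / (w₁ * w₃) = w₂ * s := by field_simp
  have hb₃ : s * (w₁ * w₂ * w₃) / (w₁ * w₂) = w₃ * s := by field_simp
  rw [hy₁, hy₂, hy₃, hbn, hb₁, hb₂, hb₃, h.A_eq, h.B_eq, ha, hs]
  constructor <;> ring

variable [NeZero (2 : F)]

theorem IsTwoIsogenous.symm (h : IsTwoIsogenous a b A B c) :
    IsTwoIsogenous A B a b (1 / (2 * c)) := by
  have hc := h.scale_ne_zero
  have h2 : (2 : F) ≠ 0 := two_ne_zero
  refine ⟨h.B_ne_zero, h.b_ne_zero, ?_, ?_⟩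
  · rw [h.A_eq]
    field_simp
  · rw [h.A_eq, h.B_eq]
    field_simp
    ring

theorem IsTwoIsogenous.Δ_ne_zero (h : IsTwoIsogenous a b A B c) : (twoTorsionCurve a b).Δ ≠ 0 :=
  Δ_twoTorsionCurve_ne_zero h.b_ne_zero h.disc_ne_zero

theorem IsTwoIsogenous.nonsingular_zero (h : IsTwoIsogenous a b A B c) :
    (twoTorsionCurve a b).Nonsingular 0 0 :=
  (equation_iff_nonsingular_of_Δ_ne_zero h.Δ_ne_zero).mp
    (equation_twoTorsionCurve_iff.mpr (by ring))

theorem IsTwoIsogenous.nonsingular_map (h : IsTwoIsogenous a b A B c)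
    (hxy : (twoTorsionCurve a b).Nonsingular x y) (hx : x ≠ 0) :
    (twoTorsionCurve A B).Nonsingular (c ^ 2 * (y / x) ^ 2) (c ^ 3 * (y / x) * (x - b / x)) :=
  (equation_iff_nonsingular_of_Δ_ne_zero h.symm.Δ_ne_zero).mp (h.equation_map hxy.1 hx)

theorem IsTwoIsogenous.exists_isLineSection_symm_map (h : IsTwoIsogenous a b A B c)
    (hxy : (twoTorsionCurve a b).Equation x y) (hx : x ≠ 0) (hy : y ≠ 0) {x' y' : F}
    (hx' : x' = c ^ 2 * (y / x) ^ 2) (hy' : y' = c ^ 3 * (y / x) * (x - b / x)) :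
    ∃ l n, IsLineSection a b l n x y x y ((1 / (2 * c)) ^ 2 * (y' / x') ^ 2)
      (-((1 / (2 * c)) ^ 3 * (y' / x') * (x' - B / x'))) := by
  have hc := h.scale_ne_zero
  have h2 : (2 : F) ≠ 0 := two_ne_zero
  have hb : b = y ^ 2 / x - x ^ 2 - a * x := by
    rw [equation_twoTorsionCurve_iff] at hxy
    field_simp
    linear_combination -hxy
  refine ⟨(3 * x ^ 2 + 2 * a * x + b) / (2 * y),
    y - (3 * x ^ 2 + 2 * a * x + b) / (2 * y) * x, ?_⟩
  rw [hx', hy', h.B_eq, hb]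
  constructor <;> field_simp <;> ring

variable [DecidableEq F]

/-- The underlying map `(x, y) ↦ (c²(y/x)², c³(y/x)(x - b/x))` of the isogeny with kernel
`{0, (0, 0)}`. -/
def IsTwoIsogenous.isogenyFun (h : IsTwoIsogenous a b A B c) :
    (twoTorsionCurve a b).Point → (twoTorsionCurve A B).Point
  | .zero => 0
  | .some _ _ hxy => if hx : _ = 0 then 0 else .some _ _ (h.nonsingular_map hxy hx)

namespace IsTwoIsogenous

theorem isogenyFun_zero (h : IsTwoIsogenous a b A B c) : h.isogenyFun 0 = 0 := rfl

theorem isogenyFun_some_zero (h : IsTwoIsogenous a b A B c)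
    (hy : (twoTorsionCurve a b).Nonsingular 0 y) : h.isogenyFun (.some 0 y hy) = 0 :=
  dif_pos rfl

theorem isogenyFun_some (h : IsTwoIsogenous a b A B c)
    (hxy : (twoTorsionCurve a b).Nonsingular x y) (hx : x ≠ 0) :
    h.isogenyFun (.some x y hxy) =
      .some (c ^ 2 * (y / x) ^ 2) (c ^ 3 * (y / x) * (x - b / x)) (h.nonsingular_map hxy hx) :=
  dif_neg hx

theorem isogenyFun_neg (h : IsTwoIsogenous a b A B c) (P : (twoTorsionCurve a b).Point) :
    h.isogenyFun (-P) = -h.isogenyFun P := by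
  rcases P with _ | ⟨x, y, hxy⟩
  · rfl
  rw [neg_some_twoTorsionCurve]
  by_cases hx : x = 0
  · subst hx
    rw [isogenyFun_some_zero, isogenyFun_some_zero, neg_zero]
  · rw [h.isogenyFun_some _ hx, h.isogenyFun_some _ hx, neg_some_twoTorsionCurve, Point.some.injEq]
    constructor <;> ring

theorem isogenyFun_add_of_zero (h : IsTwoIsogenous a b A B c)
    (h₂ : (twoTorsionCurve a b).Nonsingular x₂ y₂) (h₃ : (twoTorsionCurve a b).Nonsingular x₃ y₃)
    (hl : IsLineSection a b l 0 0 0 x₂ y₂ x₃ y₃) :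
    h.isogenyFun (.some x₂ y₂ h₂) + h.isogenyFun (.some x₃ y₃ h₃) = 0 := by
  have hb := hl.mul_eq_of_zero
  have hx₂ : x₂ ≠ 0 := left_ne_zero_of_mul (hb ▸ h.b_ne_zero)
  have hx₃ : x₃ ≠ 0 := right_ne_zero_of_mul (hb ▸ h.b_ne_zero)
  rw [h.isogenyFun_some _ hx₂, h.isogenyFun_some _ hx₃, add_eq_zero_iff_eq_neg,
    neg_some_twoTorsionCurve, Point.some.injEq, hl.y₂_eq, hl.y₃_eq, ← hb]
  constructor <;> field_simp <;> ring

/-- The isogeny with kernel `{0, (0, 0)}`, as a homomorphism on rational points. -/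
def isogeny (h : IsTwoIsogenous a b A B c) :
    (twoTorsionCurve a b).Point →+ (twoTorsionCurve A B).Point where
  toFun := h.isogenyFun
  map_zero' := h.isogenyFun_zero
  map_add' := map_add_of_isLineSection_cases h.isogenyFun_zero h.isogenyFun_neg
    (fun _ h₂ h₃ hl ↦ by
      rw [isogenyFun_some_zero, zero_add, h.isogenyFun_add_of_zero h₂ h₃ hl])
    (fun h₁ h₂ h₃ hn hl ↦ by
      obtain ⟨hx₁, hx₂, hx₃⟩ := hl.ne_zero hn
      rw [h.isogenyFun_some _ hx₁, h.isogenyFun_some _ hx₂, h.isogenyFun_some _ hx₃]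
      exact (h.isLineSection_map hn hl).add_eq_zero _ _ _)

theorem isogeny_some_zero (h : IsTwoIsogenous a b A B c)
    (hy : (twoTorsionCurve a b).Nonsingular 0 y) : h.isogeny (.some 0 y hy) = 0 :=
  h.isogenyFun_some_zero hy

theorem isogeny_some (h : IsTwoIsogenous a b A B c)
    (hxy : (twoTorsionCurve a b).Nonsingular x y) (hx : x ≠ 0) :
    h.isogeny (.some x y hxy) =
      .some (c ^ 2 * (y / x) ^ 2) (c ^ 3 * (y / x) * (x - b / x)) (h.nonsingular_map hxy hx) :=
  h.isogenyFun_some hxy hx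

theorem coe_ker_isogeny (h : IsTwoIsogenous a b A B c) :
    (h.isogeny.ker : Set (twoTorsionCurve a b).Point) = {0, .some 0 0 h.nonsingular_zero} := by
  ext P
  rw [SetLike.mem_coe, AddMonoidHom.mem_ker, Set.mem_insert_iff, Set.mem_singleton_iff]
  rcases P with _ | ⟨x, y, hxy⟩
  · exact iff_of_true (map_zero _) (.inl rfl)
  by_cases hx : x = 0
  · subst hx
    obtain rfl := eq_zero_of_nonsingular_zero hxy
    exact iff_of_true (h.isogeny_some_zero hxy) (.inr rfl)
  · rw [h.isogeny_some hxy hx]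
    simp [hx]

theorem card_ker_isogeny (h : IsTwoIsogenous a b A B c) : Nat.card h.isogeny.ker = 2 :=
  calc Nat.card h.isogeny.ker
      = (h.isogeny.ker : Set (twoTorsionCurve a b).Point).ncard := Nat.card_coe_set_eq _
    _ = 2 := by rw [h.coe_ker_isogeny, Set.ncard_pair (Point.some_ne_zero _).symm]

theorem symm_isogeny_comp_isogeny (h : IsTwoIsogenous a b A B c) :
    h.symm.isogeny.comp h.isogeny = nsmulAddMonoidHom 2 := by
  ext P
  rw [AddMonoidHom.comp_apply, nsmulAddMonoidHom_apply, two_nsmul]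
  rcases P with _ | ⟨x, y, hxy⟩
  · simp only [← Point.zero_def, map_zero, add_zero]
  by_cases hy : y = 0
  · subst hy
    have htwo : Point.some x 0 hxy + Point.some x 0 hxy = 0 :=
      Point.add_of_Y_eq rfl (by rw [negY_twoTorsionCurve, neg_zero])
    rw [htwo]
    by_cases hx : x = 0
    · subst hx
      rw [h.isogeny_some_zero, map_zero]
    · rw [h.isogeny_some _ hx, ← AddMonoidHom.mem_ker, ← SetLike.mem_coe, coe_ker_isogeny]
      simp
  · have hx : x ≠ 0 := by
      rintro rfl
      exact hy (eq_zero_of_nonsingular_zero hxy)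
    have hx' : c ^ 2 * (y / x) ^ 2 ≠ 0 :=
      mul_ne_zero (pow_ne_zero 2 h.scale_ne_zero) (pow_ne_zero 2 (div_ne_zero hy hx))
    obtain ⟨l, n, hl⟩ := h.exists_isLineSection_symm_map hxy.1 hx hy rfl rfl
    rw [h.isogeny_some _ hx, h.symm.isogeny_some _ hx', eq_comm, ← sub_eq_zero, sub_eq_add_neg,
      neg_some_twoTorsionCurve]
    exact hl.add_eq_zero _ _ _

end IsTwoIsogenous

end Isogeny

section SquareClass

/-- The group `Fˣ / (Fˣ)²` of square classes of a field, written additively. -/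
abbrev SquareClass (F : Type*) [Field F] : Type _ :=
  Additive Fˣ ⧸ (nsmulAddMonoidHom 2 : Additive Fˣ →+ Additive Fˣ).range

variable {F : Type*} [Field F] [DecidableEq F] {x y : F}

/-- The square class of a field element, with the junk value `0` at `0`. -/
def sqClass (x : F) : SquareClass F :=
  if hx : x = 0 then 0 else QuotientAddGroup.mk (.ofMul (Units.mk0 x hx))

theorem sqClass_of_ne_zero (hx : x ≠ 0) :
    sqClass x = QuotientAddGroup.mk (.ofMul (Units.mk0 x hx)) := dif_neg hx

theorem sqClass_mul (hx : x ≠ 0) (hy : y ≠ 0) : sqClass (x * y) = sqClass x + sqClass y := by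
  rw [sqClass_of_ne_zero hx, sqClass_of_ne_zero hy, sqClass_of_ne_zero (mul_ne_zero hx hy),
    ← QuotientAddGroup.mk_add, ← ofMul_mul, Units.mk0_mul]

theorem sqClass_eq_iff (hx : x ≠ 0) (hy : y ≠ 0) :
    sqClass x = sqClass y ↔ ∃ w ≠ 0, y = x * w ^ 2 := by
  rw [sqClass_of_ne_zero hx, sqClass_of_ne_zero hy, QuotientAddGroup.eq, AddMonoidHom.mem_range]
  simp only [nsmulAddMonoidHom_apply, eq_neg_add_iff_add_eq]
  constructor
  · rintro ⟨w, hw⟩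
    exact ⟨w.toMul, w.toMul.ne_zero, (congrArg (fun u ↦ (u.toMul : F)) hw).symm⟩
  · rintro ⟨w, hw, rfl⟩
    exact ⟨.ofMul (Units.mk0 w hw), congrArg Additive.ofMul (Units.ext rfl)⟩

theorem exists_sqClass_eq (α : SquareClass F) : ∃ x ≠ 0, sqClass x = α := by
  obtain ⟨u, rfl⟩ := QuotientAddGroup.mk_surjective α
  exact ⟨u.toMul, u.toMul.ne_zero, by rw [sqClass_of_ne_zero u.toMul.ne_zero, Units.mk0_val]; rfl⟩

theorem sqClass_one : sqClass (1 : F) = 0 := by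
  rw [sqClass_of_ne_zero one_ne_zero, Units.mk0_one]
  rfl

theorem sqClass_sq (x : F) : sqClass (x ^ 2) = 0 := by
  by_cases hx : x = 0
  · exact dif_pos (by rw [hx, zero_pow two_ne_zero])
  · rw [← sqClass_one, eq_comm, sqClass_eq_iff one_ne_zero (pow_ne_zero 2 hx)]
    exact ⟨x, hx, (one_mul _).symm⟩

theorem sqClass_add_self (x : F) : sqClass x + sqClass x = 0 := by
  by_cases hx : x = 0
  · rw [sqClass, dif_pos hx]
    exact add_zero (0 : SquareClass F)
  · rw [← sqClass_mul hx hx, ← sq, sqClass_sq]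

theorem exists_eq_sq_of_sqClass_eq_zero (hx : x ≠ 0) (h : sqClass x = 0) : ∃ w ≠ 0, x = w ^ 2 := by
  simpa only [one_mul] using (sqClass_eq_iff one_ne_zero hx).mp (sqClass_one.trans h.symm)

end SquareClass

section Descent

open WeierstrassCurve.Affine

variable {F : Type*} [Field F] [DecidableEq F] {a b A B c d l n x y x₁ y₁ x₂ y₂ x₃ y₃ : F}

/-- The underlying map of `descentHom`: the square class of the `x`-coordinate, corrected at
`(0, 0)` to the value `b` forced by additivity. -/
def descentFun (a b : F) : (twoTorsionCurve a b).Point → SquareClass F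
  | .zero => 0
  | .some x _ _ => if x = 0 then sqClass b else sqClass x

theorem descentFun_some_zero (hy : (twoTorsionCurve a b).Nonsingular 0 y) :
    descentFun a b (.some 0 y hy) = sqClass b := if_pos rfl

theorem descentFun_some (hxy : (twoTorsionCurve a b).Nonsingular x y) (hx : x ≠ 0) :
    descentFun a b (.some x y hxy) = sqClass x := if_neg hx

theorem descentFun_neg (P : (twoTorsionCurve a b).Point) :
    descentFun a b (-P) = -descentFun a b P := by
  rcases P with _ | ⟨x, y, hxy⟩
  · exact neg_zero.symm
  · rw [neg_some_twoTorsionCurve, eq_neg_iff_add_eq_zero]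
    by_cases hx : x = 0
    · subst hx
      rw [descentFun_some_zero, descentFun_some_zero, sqClass_add_self]
    · rw [descentFun_some _ hx, descentFun_some _ hx, sqClass_add_self]

/-- The `2`-descent homomorphism of `y² = x³ + ax² + bx`, sending `(x, y)` to the square class of
`x` if `x ≠ 0`. -/
def descentHom (a : F) (hb : b ≠ 0) : (twoTorsionCurve a b).Point →+ SquareClass F where
  toFun := descentFun a b
  map_zero' := rfl
  map_add' := map_add_of_isLineSection_cases (f := descentFun a b) rfl descentFun_neg
    (fun {_ x₂ _ x₃ _} _ _ _ hl ↦ by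
      have hmul := hl.mul_eq_of_zero
      have hx₂ : x₂ ≠ 0 := left_ne_zero_of_mul (hmul ▸ hb)
      have hx₃ : x₃ ≠ 0 := right_ne_zero_of_mul (hmul ▸ hb)
      rw [descentFun_some_zero, descentFun_some _ hx₂, descentFun_some _ hx₃, add_assoc,
        ← sqClass_mul hx₂ hx₃, hmul, sqClass_add_self])
    (fun {_ n _ _ _ _ _ _} _ _ _ hn hl ↦ by
      obtain ⟨hx₁, hx₂, hx₃⟩ := hl.ne_zero hn
      rw [descentFun_some _ hx₁, descentFun_some _ hx₂, descentFun_some _ hx₃,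
        ← sqClass_mul hx₁ hx₂, ← sqClass_mul (mul_ne_zero hx₁ hx₂) hx₃, hl.prod_eq, sqClass_sq])

theorem descentHom_some_zero (hb : b ≠ 0) (hy : (twoTorsionCurve a b).Nonsingular 0 y) :
    descentHom a hb (.some 0 y hy) = sqClass b := descentFun_some_zero hy

theorem descentHom_some (hb : b ≠ 0) (hxy : (twoTorsionCurve a b).Nonsingular x y) (hx : x ≠ 0) :
    descentHom a hb (.some x y hxy) = sqClass x := descentFun_some hxy hx

/-- The homogeneous space `z² = du⁴ + au²v² + (b/d)v⁴` has an `F`-point with `(u, v) ≠ (0, 0)`. -/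
def HasQuarticPoint (a b d : F) : Prop :=
  ∃ z u v : F, (u, v) ≠ (0, 0) ∧ z ^ 2 = d * u ^ 4 + a * u ^ 2 * v ^ 2 + b / d * v ^ 4

theorem hasQuarticPoint_of_descentHom_eq (hb : b ≠ 0) (hd : d ≠ 0)
    {P : (twoTorsionCurve a b).Point} (hP : descentHom a hb P = sqClass d) :
    HasQuarticPoint a b d := by
  rcases P with _ | ⟨x, y, hxy⟩
  · obtain ⟨w, -, rfl⟩ := exists_eq_sq_of_sqClass_eq_zero hd hP.symm
    exact ⟨w, 1, 0, by simp, by ring⟩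
  by_cases hx : x = 0
  · subst hx
    rw [descentHom_some_zero] at hP
    obtain ⟨w, -, rfl⟩ := (sqClass_eq_iff hd hb).mp hP.symm
    exact ⟨w, 0, 1, by simp, by field_simp; ring⟩
  · rw [descentHom_some hb hxy hx] at hP
    obtain ⟨w, hw, rfl⟩ := (sqClass_eq_iff hd hx).mp hP.symm
    have e := equation_twoTorsionCurve_iff.mp hxy.1
    refine ⟨y / (d * w), w, 1, by simp, ?_⟩
    field_simp
    linear_combination e

variable [NeZero (2 : F)]

namespace IsTwoIsogenous

theorem some_sq_mem_range_isogeny (h : IsTwoIsogenous a b A B c) {w : F} (hw : w ≠ 0)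
    (hy : (twoTorsionCurve A B).Nonsingular (w ^ 2) y) :
    .some (w ^ 2) y hy ∈ h.isogeny.range := by
  have hc := h.scale_ne_zero
  have h2 : (2 : F) ≠ 0 := two_ne_zero
  obtain ⟨m, rfl⟩ : ∃ m, w = c * m := ⟨w / c, by field_simp⟩
  have hm : m ≠ 0 := right_ne_zero_of_mul hw
  obtain ⟨k, rfl⟩ : ∃ k, y = c ^ 3 * m * k := ⟨y / (c ^ 3 * m), by field_simp⟩
  obtain ⟨x, rfl⟩ : ∃ x, k = 2 * x - m ^ 2 + a := ⟨(k + m ^ 2 - a) / 2, by field_simp; ring⟩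
  have hb : b = x * (m ^ 2 - a - x) := by
    have e := equation_twoTorsionCurve_iff.mp hy.1
    rw [h.A_eq, h.B_eq] at e
    have hne : 2 ^ 2 * c ^ 6 * m ^ 2 ≠ 0 :=
      mul_ne_zero (mul_ne_zero (pow_ne_zero 2 h2) (pow_ne_zero 6 hc)) (pow_ne_zero 2 hm)
    refine mul_left_cancel₀ hne ?_
    linear_combination e
  have hx : x ≠ 0 := by
    rintro rfl
    exact h.b_ne_zero (by rw [hb, zero_mul])
  have hP : (twoTorsionCurve a b).Nonsingular x (m * x) :=
    (equation_iff_nonsingular_of_Δ_ne_zero h.Δ_ne_zero).mp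
      (equation_twoTorsionCurve_iff.mpr (by rw [hb]; ring))
  refine ⟨.some x (m * x) hP, ?_⟩
  rw [h.isogeny_some hP hx, Point.some.injEq, hb]
  constructor <;> field_simp
  ring

theorem some_zero_mem_range_isogeny (h : IsTwoIsogenous a b A B c) {w : F} (hB : B = w ^ 2)
    (hy : (twoTorsionCurve A B).Nonsingular 0 y) : .some 0 y hy ∈ h.isogeny.range := by
  obtain rfl := eq_zero_of_nonsingular_zero hy
  have hc := h.scale_ne_zero
  have h2 : (2 : F) ≠ 0 := two_ne_zero
  obtain ⟨x, rfl⟩ : ∃ x, w = (2 * x + a) * c ^ 2 := ⟨(w / c ^ 2 - a) / 2, by field_simp; ring⟩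
  have hb : b = x * (-a - x) := by
    have hne : 2 ^ 2 * c ^ 4 ≠ 0 := mul_ne_zero (pow_ne_zero 2 h2) (pow_ne_zero 4 hc)
    refine mul_left_cancel₀ hne ?_
    linear_combination h.B_eq - hB
  have hx : x ≠ 0 := by
    rintro rfl
    exact h.b_ne_zero (by rw [hb, zero_mul])
  have hP : (twoTorsionCurve a b).Nonsingular x 0 :=
    (equation_iff_nonsingular_of_Δ_ne_zero h.Δ_ne_zero).mp
      (equation_twoTorsionCurve_iff.mpr (by rw [hb]; ring))
  refine ⟨.some x 0 hP, ?_⟩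
  rw [h.isogeny_some hP hx, Point.some.injEq]
  constructor <;> simp

theorem ker_descentHom_le_range_isogeny (h : IsTwoIsogenous a b A B c) :
    (descentHom A h.B_ne_zero).ker ≤ h.isogeny.range := by
  rintro (_ | ⟨x, y, hxy⟩) hP
  · exact zero_mem _
  rw [AddMonoidHom.mem_ker] at hP
  by_cases hx : x = 0
  · subst hx
    rw [descentHom_some_zero] at hP
    obtain ⟨w, -, hw⟩ := exists_eq_sq_of_sqClass_eq_zero h.B_ne_zero hP
    exact h.some_zero_mem_range_isogeny hw hxy
  · rw [descentHom_some _ hxy hx] at hP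
    obtain ⟨w, -, rfl⟩ := exists_eq_sq_of_sqClass_eq_zero hx hP
    exact h.some_sq_mem_range_isogeny (left_ne_zero_of_mul (sq w ▸ hx)) hxy

end IsTwoIsogenous

end Descent

section Ramification

variable {F : Type*} [Field F] {Γ₀ : Type*} [LinearOrderedCommGroupWithZero Γ₀]
  {v : Valuation F Γ₀} {a b d x y : F}

theorem isSquare_valuation_of_sq_eq (ha : v a ≤ 1) (hb : v b = 1)
    (h : y ^ 2 = x ^ 3 + a * x ^ 2 + b * x) : IsSquare (v x) := by
  have hfactor : v y ^ 2 = v x * v (x * (x + a) + b) := by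
    rw [← map_pow, ← map_mul, h]
    congr 1
    ring
  rcases lt_trichotomy (v x) 1 with hx | hx | hx
  · have hlt : v (x * (x + a)) < v b := by
      rw [hb, map_mul]
      exact mul_lt_one_of_lt_of_le hx ((v.map_add x a).trans (max_le hx.le ha))
    rw [v.map_add_eq_of_lt_right hlt, hb, mul_one] at hfactor
    exact ⟨v y, by rw [← hfactor, sq]⟩
  · exact hx ▸ IsSquare.one
  · have hxa : v (x + a) = v x := v.map_add_eq_of_lt_left (ha.trans_lt hx)
    have hlt : v b < v (x * (x + a)) := by
      rw [hb, map_mul, hxa]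
      exact one_lt_mul'' hx hx
    rw [v.map_add_eq_of_lt_left hlt, map_mul, hxa] at hfactor
    have hx0 : v x ≠ 0 := (zero_lt_one.trans hx).ne'
    refine ⟨v y / v x, ?_⟩
    rw [div_mul_div_comm, eq_div_iff (mul_ne_zero hx0 hx0), ← sq (v y), hfactor]

theorem isSquare_valuation_of_descentHom_eq [DecidableEq F] (ha : v a ≤ 1) (hvb : v b = 1)
    (hb : b ≠ 0) (hd : d ≠ 0) {P : (twoTorsionCurve a b).Point}
    (hP : descentHom a hb P = sqClass d) : IsSquare (v d) := by
  have hclass {x : F} (hx : x ≠ 0) (hxd : sqClass x = sqClass d) (hvx : IsSquare (v x)) :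
      IsSquare (v d) := by
    obtain ⟨w, -, rfl⟩ := (sqClass_eq_iff hx hd).mp hxd
    rw [map_mul, map_pow]
    exact hvx.mul (IsSquare.sq _)
  rcases P with _ | ⟨x, y, hxy⟩
  · exact hclass one_ne_zero (sqClass_one.trans hP) (v.map_one ▸ IsSquare.one)
  by_cases hx : x = 0
  · subst hx
    rw [descentHom_some_zero] at hP
    exact hclass hb hP (hvb ▸ IsSquare.one)
  · rw [descentHom_some hb hxy hx] at hP
    exact hclass hx hP
      (isSquare_valuation_of_sq_eq ha hvb (equation_twoTorsionCurve_iff.mp hxy.1))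

end Ramification

section RationalSquareClasses

theorem not_isSquare_padicValuation {d : ℤ} (hd : Squarefree d) {q : ℕ} [Fact q.Prime]
    (hq : (q : ℤ) ∣ d) : ¬ IsSquare (Rat.padicValuation q d) := by
  obtain ⟨m, rfl⟩ := hq
  have hm : ¬ (q : ℤ) ∣ m := fun hqm ↦
    (Nat.prime_iff_prime_int.mp Fact.out).not_isUnit (hd q (mul_dvd_mul_left _ hqm))
  have hvm : Rat.padicValuation q m = 1 := by
    rw [Rat.padicValuation_cast]
    exact Int.padicValuation_eq_one_iff.mpr hm
  rw [Int.cast_mul, map_mul, hvm, mul_one, Int.cast_natCast, Rat.padicValuation_self]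
  rintro ⟨w, hw⟩
  have hw0 : w ≠ 0 := by
    rintro rfl
    simp at hw
  have hlog := congrArg WithZero.log hw
  rw [WithZero.log_exp, WithZero.log_mul hw0 hw0] at hlog
  lia

theorem dvd_of_descentHom_eq {a b : ℤ} (hb : (b : ℚ) ≠ 0) {P : (twoTorsionCurve (a : ℚ) b).Point}
    {d : ℤ} (hd : Squarefree d) (hP : descentHom (a : ℚ) hb P = sqClass (d : ℚ)) {q : ℕ}
    (hq : q.Prime) (hqd : (q : ℤ) ∣ d) : (q : ℤ) ∣ b := by
  have : Fact q.Prime := ⟨hq⟩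
  by_contra hqb
  refine not_isSquare_padicValuation hd hqd
    (isSquare_valuation_of_descentHom_eq ?_ ?_ hb (Int.cast_ne_zero.mpr hd.ne_zero) hP)
  · rw [Rat.padicValuation_cast]
    exact Int.padicValuation_le_one q a
  · rw [Rat.padicValuation_cast]
    exact Int.padicValuation_eq_one_iff.mpr hqb

theorem exists_squarefree_sqClass_eq (α : SquareClass ℚ) :
    ∃ d : ℤ, Squarefree d ∧ sqClass (d : ℚ) = α := by
  obtain ⟨x, hx, rfl⟩ := exists_sqClass_eq α
  obtain ⟨s, t, hst, hs⟩ := Nat.sq_mul_squarefree (x.num * x.den).natAbs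
  obtain ⟨u, hu⟩ := (Int.associated_natAbs (x.num * x.den)).symm
  have hd : Squarefree ((s : ℤ) * u) :=
    (associated_mul_unit_right (s : ℤ) u u.isUnit).squarefree_iff.mp (Int.squarefree_natCast.mpr hs)
  have hden : (x.den : ℚ) ≠ 0 := Nat.cast_ne_zero.mpr x.den_ne_zero
  have hx_eq : x = ((s * u : ℤ) : ℚ) * (t / x.den) ^ 2 :=
    calc x = ((x.num * x.den : ℤ) : ℚ) / x.den ^ 2 := by
          push_cast
          rw [sq, mul_div_mul_right _ _ hden, Rat.num_div_den]
      _ = ((s * u : ℤ) : ℚ) * (t / x.den) ^ 2 := by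
          rw [← hu, ← hst]
          push_cast
          ring
  refine ⟨s * u, hd, (sqClass_eq_iff (Int.cast_ne_zero.mpr hd.ne_zero) hx).mpr ⟨_, ?_, hx_eq⟩⟩
  intro hw
  exact hx (by rw [hx_eq, hw, zero_pow two_ne_zero, mul_zero])

theorem exists_unit_mul_prod_eq {d : ℤ} (hd : Squarefree d) :
    ∃ u : ℤˣ, (∏ q ∈ d.natAbs.primeFactors, (q : ℤ)) * u = d := by
  rw [← Nat.cast_prod, Nat.prod_primeFactors_of_squarefree (Int.squarefree_natAbs.mpr hd)]
  exact (Int.associated_natAbs d).symm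

theorem index_ker_le_of_primeFactors_subset {G : Type*} [AddGroup G] (f : G →+ SquareClass ℚ)
    {S : Finset ℕ}
    (hS : ∀ P (d : ℤ), Squarefree d → f P = sqClass (d : ℚ) → d.natAbs.primeFactors ⊆ S) :
    f.ker.FiniteIndex ∧ f.ker.index ≤ 2 ^ (S.card + 1) := by
  let signedProd (e : Finset ℕ × ℤˣ) : SquareClass ℚ :=
    sqClass (((∏ q ∈ e.1, (q : ℤ)) * e.2 : ℤ) : ℚ)
  let E : Finset (Finset ℕ × ℤˣ) := S.powerset ×ˢ Finset.univ
  have hrange : (f.range : Set (SquareClass ℚ)) ⊆ signedProd '' E := by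
    rintro _ ⟨P, rfl⟩
    obtain ⟨d, hd, hdP⟩ := exists_squarefree_sqClass_eq (f P)
    obtain ⟨u, hu⟩ := exists_unit_mul_prod_eq hd
    have hmem : (d.natAbs.primeFactors, u) ∈ E :=
      Finset.mem_product.mpr ⟨Finset.mem_powerset.mpr (hS P d hd hdP.symm), Finset.mem_univ u⟩
    refine ⟨_, Finset.mem_coe.mpr hmem, ?_⟩
    rw [← hdP]
    exact congrArg (fun n : ℤ ↦ sqClass (n : ℚ)) hu
  have hE : E.card = 2 ^ (S.card + 1) := by
    rw [Finset.card_product, Finset.card_powerset, Finset.card_univ, Fintype.card_units_int,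
      pow_succ]
  have hfin : (signedProd '' E).Finite := E.finite_toSet.image _
  have : Finite f.range := hfin.subset hrange
  refine ⟨⟨by rw [AddSubgroup.index_ker]; exact Nat.card_pos.ne'⟩, ?_⟩
  rw [AddSubgroup.index_ker]
  calc Nat.card f.range
      ≤ (signedProd '' E).ncard := Set.ncard_le_ncard hrange hfin
    _ ≤ (E : Set (Finset ℕ × ℤˣ)).ncard := Set.ncard_image_le E.finite_toSet
    _ = 2 ^ (S.card + 1) := by rw [Set.ncard_coe_finset, hE]

end RationalSquareClasses

theorem Eab_eq_twoTorsionCurve (a b : ℤ) : Eab a b = twoTorsionCurve (a : ℚ) (b : ℚ) := rfl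

theorem HasQuarticPoint.map {F K : Type*} [Field F] [Field K] {a b d : F}
    (h : HasQuarticPoint a b d) (f : F →+* K) : HasQuarticPoint (f a) (f b) (f d) := by
  obtain ⟨z, u, v, huv, hz⟩ := h
  refine ⟨f z, f u, f v, fun h0 ↦ huv ?_, ?_⟩
  · simpa only [Prod.mk.injEq, map_eq_zero] using h0
  · simpa only [map_add, map_mul, map_pow, map_div₀] using congrArg f hz

theorem not_noLocalSolution_of_hasQuarticPoint {ℓ : ℕ} (hℓ : ℓ.Prime) {a b d : ℤ}
    (hd : d ∣ a ^ 2 - 4 * b)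
    (h : HasQuarticPoint ((-2 * a : ℤ) : ℚ) ((a ^ 2 - 4 * b : ℤ) : ℚ) d) :
    ¬ NoLocalSolution ℓ hℓ a b d := by
  have : Fact ℓ.Prime := ⟨hℓ⟩
  obtain ⟨z, u, v, huv, hz⟩ := h.map (Rat.castHom ℚ_[ℓ])
  refine not_not.mpr ⟨z, u, v, huv, hz.trans ?_⟩
  rw [Int.cast_div_charZero hd]
  simp only [map_intCast]
  push_cast
  ring

theorem dvd_of_squarefree_of_primeFactors_subset {d n : ℤ} (hd : Squarefree d)
    (h : d.natAbs.primeFactors ⊆ n.natAbs.primeFactors) : d ∣ n := by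
  rw [← Int.natAbs_dvd_natAbs,
    ← Nat.prod_primeFactors_of_squarefree (Int.squarefree_natAbs.mpr hd)]
  exact (Finset.prod_dvd_prod_of_subset _ _ _ h).trans (Nat.prod_primeFactors_dvd _)

theorem primeFactors_subset_of_descentHom_eq {a b d : ℤ} (hb : (b : ℚ) ≠ 0)
    {P : (twoTorsionCurve (a : ℚ) b).Point} (hd : Squarefree d)
    (hP : descentHom (a : ℚ) hb P = sqClass (d : ℚ)) :
    d.natAbs.primeFactors ⊆ b.natAbs.primeFactors := fun q hq ↦ by
  have hq' := Nat.prime_of_mem_primeFactors hq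
  have hqd : (q : ℤ) ∣ d := Int.natCast_dvd.mpr (Nat.dvd_of_mem_primeFactors hq)
  exact Nat.mem_primeFactors.mpr ⟨hq', Int.natCast_dvd.mp (dvd_of_descentHom_eq hb hd hP hq' hqd),
    Int.natAbs_ne_zero.mpr (Int.cast_ne_zero.mp hb)⟩

theorem IsTwoIsogenous.index_range_isogeny_le {a b c : ℚ} {A B : ℤ}
    (h : IsTwoIsogenous a b A B c) {S : Finset ℕ}
    (hS : ∀ P (d : ℤ), Squarefree d → descentHom (A : ℚ) h.B_ne_zero P = sqClass (d : ℚ) →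
      d.natAbs.primeFactors ⊆ S) :
    h.isogeny.range.FiniteIndex ∧ h.isogeny.range.index ≤ 2 ^ (S.card + 1) := by
  obtain ⟨hfin, hle⟩ := index_ker_le_of_primeFactors_subset (descentHom (A : ℚ) h.B_ne_zero) hS
  have hker := h.ker_descentHom_le_range_isogeny
  exact ⟨AddSubgroup.finiteIndex_of_le hker, (AddSubgroup.index_antitone hker).trans hle⟩

theorem IsTwoIsogenous.mwRank_le {a b A B : ℤ} {c : ℚ} (h : IsTwoIsogenous (a : ℚ) b A B c)
    {S T : Finset ℕ}
    (hS : ∀ P (d : ℤ), Squarefree d → descentHom (A : ℚ) h.B_ne_zero P = sqClass (d : ℚ) →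
      d.natAbs.primeFactors ⊆ S)
    (hT : ∀ P (d : ℤ), Squarefree d → descentHom (a : ℚ) h.b_ne_zero P = sqClass (d : ℚ) →
      d.natAbs.primeFactors ⊆ T) :
    mwRank (twoTorsionCurve (a : ℚ) b) ≤ ((S.card + T.card : ℕ) : Cardinal) := by
  obtain ⟨hfin, hle⟩ := h.index_range_isogeny_le hS
  obtain ⟨hfin', hle'⟩ := h.symm.index_range_isogeny_le hT
  have hfinTwo := finiteIndex_range_comp hfin hfin'
  rw [h.symm_isogeny_comp_isogeny] at hfinTwo
  have : (twoTorsionCurve (a : ℚ) b).IsElliptic := ⟨h.Δ_ne_zero.isUnit⟩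
  have : AddGroup.FG (twoTorsionCurve (a : ℚ) b).Point := fg_point_of_finiteIndex_two hfinTwo
  have hcount := pow_finrank_mul_card_ker two_ne_zero h.symm_isogeny_comp_isogeny
  rw [h.card_ker_isogeny, h.symm.card_ker_isogeny] at hcount
  rw [mwRank, rank_rat_tensor, Nat.cast_le, ← Nat.pow_le_pow_iff_right one_lt_two]
  refine Nat.le_of_mul_le_mul_right (c := 2 * 2) ?_ (by norm_num)
  calc _ = _ := hcount
    _ ≤ 2 ^ (S.card + 1) * 2 ^ (T.card + 1) := Nat.mul_le_mul hle hle'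
    _ = 2 ^ (S.card + T.card) * (2 * 2) := by ring

theorem primeFactors_subset_erase_of_noLocalSolution {a b : ℤ} {p : ℕ}
    (hB : ((a ^ 2 - 4 * b : ℤ) : ℚ) ≠ 0)
    (hloc : ∀ d : ℤ, Squarefree d → (p : ℤ) ∣ d → d ∣ a ^ 2 - 4 * b →
      ∃ (ℓ : ℕ) (hℓ : ℓ.Prime), NoLocalSolution ℓ hℓ a b d)
    {P : (twoTorsionCurve ((-2 * a : ℤ) : ℚ) ((a ^ 2 - 4 * b : ℤ) : ℚ)).Point} {d : ℤ}
    (hd : Squarefree d) (hP : descentHom ((-2 * a : ℤ) : ℚ) hB P = sqClass (d : ℚ)) :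
    d.natAbs.primeFactors ⊆ (a ^ 2 - 4 * b).natAbs.primeFactors.erase p := by
  have hsub := primeFactors_subset_of_descentHom_eq hB hd hP
  have hdvd := dvd_of_squarefree_of_primeFactors_subset hd hsub
  refine Finset.subset_erase.mpr ⟨hsub, fun hpmem ↦ ?_⟩
  obtain ⟨ℓ, hℓ, hno⟩ := hloc d hd (Int.natCast_dvd.mpr (Nat.dvd_of_mem_primeFactors hpmem)) hdvd
  exact not_noLocalSolution_of_hasQuarticPoint hℓ hdvd
    (hasQuarticPoint_of_descentHom_eq hB (Int.cast_ne_zero.mpr hd.ne_zero) hP) hno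

theorem isTwoIsogenous_of_int {a b : ℤ} (hnz : b * (a ^ 2 - 4 * b) ≠ 0) :
    IsTwoIsogenous (a : ℚ) (b : ℚ) ((-2 * a : ℤ) : ℚ) ((a ^ 2 - 4 * b : ℤ) : ℚ) 1 where
  b_ne_zero := Int.cast_ne_zero.mpr (left_ne_zero_of_mul hnz)
  B_ne_zero := Int.cast_ne_zero.mpr (right_ne_zero_of_mul hnz)
  A_eq := by push_cast; ring
  B_eq := by push_cast; ring

end TwoDescent

open TwoDescent in
theorem rank_bound_of_local_insolubility_general (a b : ℤ) (hnz : b * (a ^ 2 - 4 * b) ≠ 0)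
    (p : ℕ) (hp : p.Prime) (hpd : (p : ℤ) ∣ a ^ 2 - 4 * b)
    (hloc : ∀ d : ℤ, Squarefree d → (p : ℤ) ∣ d → d ∣ a ^ 2 - 4 * b →
      ∃ (ℓ : ℕ) (hℓ : ℓ.Prime), NoLocalSolution ℓ hℓ a b d) :
    mwRank (Eab a b) ≤ ((omega (a ^ 2 - 4 * b) + omega b - 1 : ℕ) : Cardinal) := by
  have hiso := isTwoIsogenous_of_int hnz
  have hle := hiso.mwRank_le
    (fun _ _ hd hP ↦ primeFactors_subset_erase_of_noLocalSolution hiso.B_ne_zero hloc hd hP)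
    (fun _ _ hd hP ↦ primeFactors_subset_of_descentHom_eq hiso.b_ne_zero hd hP)
  have hpmem : p ∈ (a ^ 2 - 4 * b).natAbs.primeFactors := Nat.mem_primeFactors.mpr
    ⟨hp, Int.natCast_dvd.mp hpd, Int.natAbs_ne_zero.mpr (right_ne_zero_of_mul hnz)⟩
  rw [Eab_eq_twoTorsionCurve]
  refine hle.trans_eq (congrArg Nat.cast ?_)
  rw [Finset.card_erase_of_mem hpmem, omega, omega,
    Nat.sub_add_comm (Finset.card_pos.mpr ⟨p, hpmem⟩)]

theorem rank_bound_of_local_insolubility (a b : ℤ) (hab : IsCoprime a b)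
    (hnz : b * (a ^ 2 - 4 * b) ≠ 0) (p : ℕ) (hp : p.Prime) (hpd : (p : ℤ) ∣ a ^ 2 - 4 * b)
    (hloc : ∀ d : ℤ, d ≠ 0 → Squarefree d → (p : ℤ) ∣ d →
      (∀ q : ℕ, q.Prime → (q : ℤ) ∣ d → (q : ℤ) ∣ a ^ 2 - 4 * b) →
      ∃ ℓ : ℕ, ∃ hℓ : ℓ.Prime, (ℓ : ℤ) ∣ 2 * b * (a ^ 2 - 4 * b) ∧
        NoLocalSolution ℓ hℓ a b d) :
    mwRank (Eab a b) ≤ ((omega (a ^ 2 - 4 * b) + omega b - 1 : ℕ) : Cardinal) :=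
  rank_bound_of_local_insolubility_general a b hnz p hp hpd fun d hd hpd hdvd ↦
    let ⟨ℓ, hℓ, _, hno⟩ := hloc d hd.ne_zero hd hpd fun _ _ hqd ↦ hqd.trans hdvd
    ⟨ℓ, hℓ, hno⟩
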